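/- Two real skew-symmetric 4×4 matrices M and N are conjugate under SO(4) (i.e. there exists a real 4×4 matrix A with AᵀA = I and det A = 1 such that N = A M Aᵀ) if and only if Trace(M²) = Trace(N²) and Pf(M) = Pf(N), where Pf(M) = M₁₂M₃₄ − M₁₃M₂₄ + M₁₄M₂₃ is the Pfaffian of M. -/

import Mathlib

/-!
Identify `ℝ⁴` with the quaternions. Every skew-symmetric `4 × 4` matrix is uniquely
`L p + R q`, where `L p` is left multiplication by a purely imaginary quaternion `p` and `R q` is
right multiplication by a purely imaginary `q` (the splitting `so(4) = so(3) ⊕ so(3)`;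
see `eq_leftMat_add_rightMat`). Here `4|p|² = S + 2 Pf M` and `4|q|² = S - 2 Pf M`, where
`S = -Tr(M²)/2` is the sum of the squares of the entries above the diagonal. Hence `Tr(M²)` and
`Pf M` determine exactly the two norms `|p|` and `|q|`.

Left and right multiplications commute, so conjugating by `L a * R b` with `a`, `b` unit
quaternions replaces `p` by `a p a⁻¹` and `q` by `b⁻¹ q b`. Two imaginary quaternions of equal norm
are conjugate by a unit quaternion (`exists_unit_conj`), so equal invariants give conjugate
matrices; `L a * R b` lies in `SO(4)`.

Conversely the trace is a conjugation invariant, and `Pf (A M Aᵀ) = det A * Pf M` is a polynomial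
identity (`pf_conj`).
-/

open Matrix

/-- The Pfaffian of a 4×4 skew-symmetric matrix:
`Pf(M) = M₁₂M₃₄ − M₁₃M₂₄ + M₁₄M₂₃`. -/
noncomputable def Pf (M : Matrix (Fin 4) (Fin 4) ℝ) : ℝ :=
  M 0 1 * M 2 3 - M 0 2 * M 1 3 + M 0 3 * M 1 2

open Quaternion

/-- The matrix of `x ↦ a * x` on the quaternions, in the basis `1, i, j, k`. -/
def leftMat (a : ℍ[ℝ]) : Matrix (Fin 4) (Fin 4) ℝ :=
  !![a.re, -a.imI, -a.imJ, -a.imK;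
     a.imI, a.re, -a.imK, a.imJ;
     a.imJ, a.imK, a.re, -a.imI;
     a.imK, -a.imJ, a.imI, a.re]

/-- The matrix of `x ↦ x * a` on the quaternions, in the basis `1, i, j, k`. -/
def rightMat (a : ℍ[ℝ]) : Matrix (Fin 4) (Fin 4) ℝ :=
  !![a.re, -a.imI, -a.imJ, -a.imK;
     a.imI, a.re, a.imK, -a.imJ;
     a.imJ, -a.imK, a.re, a.imI;
     a.imK, a.imJ, -a.imI, a.re]

lemma leftMat_mul (a b : ℍ[ℝ]) : leftMat (a * b) = leftMat a * leftMat b := by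
  ext i j
  fin_cases i <;> fin_cases j <;>
    simp [leftMat, Matrix.mul_apply, Fin.sum_univ_four] <;> ring

lemma rightMat_mul (a b : ℍ[ℝ]) : rightMat (a * b) = rightMat b * rightMat a := by
  ext i j
  fin_cases i <;> fin_cases j <;>
    simp [rightMat, Matrix.mul_apply, Fin.sum_univ_four] <;> ring

lemma leftMat_comm_rightMat (a b : ℍ[ℝ]) :
    leftMat a * rightMat b = rightMat b * leftMat a := by
  ext i j
  fin_cases i <;> fin_cases j <;>
    simp [leftMat, rightMat, Matrix.mul_apply, Fin.sum_univ_four] <;> ring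

lemma leftMat_transpose (a : ℍ[ℝ]) : (leftMat a)ᵀ = leftMat (star a) := by
  ext i j
  fin_cases i <;> fin_cases j <;> simp [leftMat]

lemma rightMat_transpose (a : ℍ[ℝ]) : (rightMat a)ᵀ = rightMat (star a) := by
  ext i j
  fin_cases i <;> fin_cases j <;> simp [rightMat]

lemma leftMat_one : leftMat 1 = 1 := by
  ext i j
  fin_cases i <;> fin_cases j <;> simp [leftMat]

lemma rightMat_one : rightMat 1 = 1 := by
  ext i j
  fin_cases i <;> fin_cases j <;> simp [rightMat]

lemma leftMat_det (a : ℍ[ℝ]) : (leftMat a).det = normSq a ^ 2 := by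
  simp [leftMat, Matrix.det_succ_row_zero, Fin.sum_univ_succ, Fin.succAbove, normSq_def']
  ring

lemma rightMat_det (a : ℍ[ℝ]) : (rightMat a).det = normSq a ^ 2 := by
  simp [rightMat, Matrix.det_succ_row_zero, Fin.sum_univ_succ, Fin.succAbove, normSq_def']
  ring

/-- It suffices to intertwine `p` and `p'` by a nonzero quaternion, which can be normalised. -/
lemma exists_unit_of_ne_zero {p p' a : ℍ[ℝ]} (ha : a ≠ 0) (h : a * p = p' * a) :
    ∃ u : ℍ[ℝ], normSq u = 1 ∧ u * p = p' * u := by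
  have hn : ‖a‖ ≠ 0 := norm_ne_zero_iff.mpr ha
  refine ⟨(‖a‖⁻¹ : ℝ) • a, ?_, ?_⟩
  · rw [normSq_eq_norm_mul_self, norm_smul, norm_inv, norm_norm, inv_mul_cancel₀ hn, one_mul]
  · rw [smul_mul_assoc, mul_smul_comm, h]

/-- Imaginary quaternions of equal norm are conjugate by a unit quaternion. -/
lemma exists_unit_conj (p p' : ℍ[ℝ]) (hp : p.re = 0) (hp' : p'.re = 0)
    (h : normSq p = normSq p') : ∃ u : ℍ[ℝ], normSq u = 1 ∧ u * p = p' * u := by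
  by_cases hsum : p + p' = 0
  · -- For `p' = -p` any nonzero imaginary quaternion orthogonal to `p` anticommutes with `p`.
    obtain rfl : p' = -p := (neg_eq_of_add_eq_zero_right hsum).symm
    by_cases hIJ : p.imI = 0 ∧ p.imJ = 0
    · obtain ⟨a, a0, a1, a2, a3⟩ : ∃ a : ℍ[ℝ], a.re = 0 ∧ a.imI = 1 ∧ a.imJ = 0 ∧ a.imK = 0 :=
        ⟨⟨0, 1, 0, 0⟩, rfl, rfl, rfl, rfl⟩
      refine exists_unit_of_ne_zero (a := a) ?_ ?_
      · rintro rfl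
        simp at a1
      · ext <;> simp [hp, hIJ.1, hIJ.2, a0, a1, a2, a3]
    · obtain ⟨a, a0, a1, a2, a3⟩ :
          ∃ a : ℍ[ℝ], a.re = 0 ∧ a.imI = -p.imJ ∧ a.imJ = p.imI ∧ a.imK = 0 :=
        ⟨⟨0, -p.imJ, p.imI, 0⟩, rfl, rfl, rfl, rfl⟩
      refine exists_unit_of_ne_zero (a := a) ?_ ?_
      · rintro rfl
        simp at a1 a2
        exact hIJ ⟨a2.symm, a1⟩
      · ext <;> simp [hp, a0, a1, a2, a3] <;> ring
  · -- Since `p² = p'² = -|p|²`, the quaternion `a = |p|² - p' p` satisfies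
    -- `a p = |p|² (p + p') = p' a`.
    have sq (x : ℍ[ℝ]) (hx : x.re = 0) : x * x = -((normSq x : ℝ) : ℍ[ℝ]) := by
      have hs : star x = -x := by ext <;> simp [hx]
      rw [← self_mul_star, hs, mul_neg, neg_neg]
    have h1 : (((normSq p : ℝ) : ℍ[ℝ]) - p' * p) * p = ((normSq p : ℝ) : ℍ[ℝ]) * (p + p') := by
      rw [sub_mul, mul_assoc, sq p hp, mul_neg, sub_neg_eq_add, ← coe_commutes, mul_add]
    have h2 : p' * (((normSq p : ℝ) : ℍ[ℝ]) - p' * p) = ((normSq p : ℝ) : ℍ[ℝ]) * (p + p') := by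
      rw [mul_sub, ← mul_assoc, sq p' hp', ← h, neg_mul, sub_neg_eq_add, ← coe_commutes, mul_add,
        add_comm]
    refine exists_unit_of_ne_zero (a := ((normSq p : ℝ) : ℍ[ℝ]) - p' * p) ?_ (h1.trans h2.symm)
    intro h0
    rw [h0, zero_mul] at h1
    rcases mul_eq_zero.mp h1.symm with h3 | h3
    · have h4 : normSq p = 0 := coe_injective h3
      have h5 : normSq p' = 0 := h ▸ h4
      rw [normSq_eq_zero] at h4 h5
      exact hsum (by rw [h4, h5, add_zero])
    · exact hsum h3

/-- The left (self-dual) imaginary quaternion of a skew-symmetric matrix. -/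
noncomputable def leftPart (M : Matrix (Fin 4) (Fin 4) ℝ) : ℍ[ℝ] :=
  ⟨0, -(M 0 1 + M 2 3) / 2, (M 1 3 - M 0 2) / 2, -(M 0 3 + M 1 2) / 2⟩

/-- The right (anti-self-dual) imaginary quaternion of a skew-symmetric matrix. -/
noncomputable def rightPart (M : Matrix (Fin 4) (Fin 4) ℝ) : ℍ[ℝ] :=
  ⟨0, (M 2 3 - M 0 1) / 2, -(M 0 2 + M 1 3) / 2, (M 1 2 - M 0 3) / 2⟩

lemma skew_apply {M : Matrix (Fin 4) (Fin 4) ℝ} (hM : Mᵀ = -M) (i j : Fin 4) :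
    M j i = -M i j := congrFun (congrFun hM i) j

lemma skew_diag {M : Matrix (Fin 4) (Fin 4) ℝ} (hM : Mᵀ = -M) (i : Fin 4) : M i i = 0 := by
  linarith [skew_apply hM i i]

lemma eq_leftMat_add_rightMat {M : Matrix (Fin 4) (Fin 4) ℝ} (hM : Mᵀ = -M) :
    M = leftMat (leftPart M) + rightMat (rightPart M) := by
  have e := skew_apply hM
  have d := skew_diag hM
  ext i j
  fin_cases i <;> fin_cases j <;>
    simp [leftMat, rightMat, leftPart, rightPart, d, e 0 1, e 0 2, e 0 3, e 1 2, e 1 3, e 2 3] <;>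
    ring

lemma trace_sq {M : Matrix (Fin 4) (Fin 4) ℝ} (hM : Mᵀ = -M) :
    Matrix.trace (M * M) =
      -2 * (M 0 1 ^ 2 + M 0 2 ^ 2 + M 0 3 ^ 2 + M 1 2 ^ 2 + M 1 3 ^ 2 + M 2 3 ^ 2) := by
  have e := skew_apply hM
  have d := skew_diag hM
  simp [Matrix.trace, Matrix.mul_apply, Fin.sum_univ_four, d,
    e 0 1, e 0 2, e 0 3, e 1 2, e 1 3, e 2 3]
  ring

lemma normSq_leftPart {M : Matrix (Fin 4) (Fin 4) ℝ} (hM : Mᵀ = -M) :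
    normSq (leftPart M) = -Matrix.trace (M * M) / 8 + Pf M / 2 := by
  rw [trace_sq hM, normSq_def']
  simp only [leftPart, Pf]
  ring

lemma normSq_rightPart {M : Matrix (Fin 4) (Fin 4) ℝ} (hM : Mᵀ = -M) :
    normSq (rightPart M) = -Matrix.trace (M * M) / 8 - Pf M / 2 := by
  rw [trace_sq hM, normSq_def']
  simp only [rightPart, Pf]
  ring

lemma pf_conj (A : Matrix (Fin 4) (Fin 4) ℝ) {M : Matrix (Fin 4) (Fin 4) ℝ} (hM : Mᵀ = -M) :
    Pf (A * M * Aᵀ) = A.det * Pf M := by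
  have e := skew_apply hM
  have d := skew_diag hM
  simp [Pf, Matrix.mul_apply, d, e 0 1, e 0 2, e 0 3, e 1 2, e 1 3, e 2 3,
    Matrix.det_succ_row_zero, Fin.sum_univ_succ, Fin.succAbove]
  ring

/-- two real skew-symmetric 4×4 matrices are conjugate under
`SO(4)` iff they have the same `Trace(M²)` and the same Pfaffian. -/
theorem stmt3 (M N : Matrix (Fin 4) (Fin 4) ℝ)
    (hM : Mᵀ = -M) (hN : Nᵀ = -N) :
    (∃ A : Matrix (Fin 4) (Fin 4) ℝ, Aᵀ * A = 1 ∧ A.det = 1 ∧ N = A * M * Aᵀ) ↔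
      (Matrix.trace (M * M) = Matrix.trace (N * N) ∧ Pf M = Pf N) := by
  constructor
  · rintro ⟨A, hA, hdet, rfl⟩
    refine ⟨?_, by rw [pf_conj A hM, hdet, one_mul]⟩
    have h1 : A * M * Aᵀ * (A * M * Aᵀ) = A * (M * M) * Aᵀ := by
      calc A * M * Aᵀ * (A * M * Aᵀ) = A * M * (Aᵀ * A) * M * Aᵀ := by
            simp only [Matrix.mul_assoc]
        _ = A * (M * M) * Aᵀ := by rw [hA, Matrix.mul_one, Matrix.mul_assoc A M M]
    rw [h1, Matrix.trace_mul_comm (A * (M * M)), ← Matrix.mul_assoc, hA, Matrix.one_mul]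
  · rintro ⟨ht, hpf⟩
    obtain ⟨a, ha, hap⟩ := exists_unit_conj (leftPart M) (leftPart N) rfl rfl
      (by rw [normSq_leftPart hM, normSq_leftPart hN, ht, hpf])
    -- Right multiplication reverses products, so here the roles of `M` and `N` are exchanged.
    obtain ⟨b, hb, hbq⟩ := exists_unit_conj (rightPart N) (rightPart M) rfl rfl
      (by rw [normSq_rightPart hM, normSq_rightPart hN, ht, hpf])
    have orth : (leftMat a * rightMat b)ᵀ * (leftMat a * rightMat b) = 1 := by
      have hL : (leftMat a)ᵀ * leftMat a = 1 := by
        rw [leftMat_transpose, ← leftMat_mul, star_mul_self, ha, coe_one, leftMat_one]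
      have hR : (rightMat b)ᵀ * rightMat b = 1 := by
        rw [rightMat_transpose, ← rightMat_mul, self_mul_star, hb, coe_one, rightMat_one]
      rw [Matrix.transpose_mul, Matrix.mul_assoc, ← Matrix.mul_assoc _ (leftMat a), hL,
        Matrix.one_mul, hR]
    have inter : leftMat a * rightMat b * M = N * (leftMat a * rightMat b) := by
      have hL : leftMat a * leftMat (leftPart M) = leftMat (leftPart N) * leftMat a := by
        rw [← leftMat_mul, hap, leftMat_mul]
      have hR : rightMat b * rightMat (rightPart M) = rightMat (rightPart N) * rightMat b := by
        rw [← rightMat_mul, ← hbq, rightMat_mul]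
      conv_lhs => rw [eq_leftMat_add_rightMat hM]
      conv_rhs => rw [eq_leftMat_add_rightMat hN]
      rw [Matrix.mul_add, Matrix.add_mul]
      congr 1
      · rw [Matrix.mul_assoc, ← leftMat_comm_rightMat, ← Matrix.mul_assoc, hL, Matrix.mul_assoc]
      · rw [Matrix.mul_assoc, hR, ← Matrix.mul_assoc, leftMat_comm_rightMat, Matrix.mul_assoc]
    refine ⟨leftMat a * rightMat b, orth, ?_, ?_⟩
    · rw [Matrix.det_mul, leftMat_det, rightMat_det, ha, hb]
      norm_num
    · rw [inter, Matrix.mul_assoc, mul_eq_one_comm.mp orth, Matrix.mul_one]
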